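/- Let d ≥ 3 and let H = F_2[T, X_2, …, X_d]/(T², X_i² − T·X_i : 2 ≤ i ≤ d). Then H is not strongly Koszul: there exists no minimal system X of homogeneous generators of the augmentation ideal H_+ such that for every subset Y ⊊ X and every x ∈ X \ Y, the colon ideal (Y) : x is generated by a subset of X. -/

import Mathlib

open MvPolynomial

/-- The colon ideal `I : x = {a | a * x ∈ I}`. -/
def colonIdeal {A : Type*} [Ring A] (I : Ideal A) (x : A) : Ideal A :=
  Submodule.comap (LinearMap.toSpanSingleton A A x) I

/-- The defining relations `T², X_i² − T·X_i` (with `T = X 0`) of the cohomology of a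
2-rigid field of level 2. -/
noncomputable def rgRel (d : ℕ) [NeZero d] : Ideal (MvPolynomial (Fin d) (ZMod 2)) :=
  Ideal.span {p | p = X 0 ^ 2 ∨ ∃ i : Fin d, i ≠ 0 ∧ p = X i ^ 2 - X 0 * X i}

/-- The algebra `H = F₂[T, X₂, …, X_d]/(T², X_i² − T·X_i)`. -/
abbrev RGH (d : ℕ) [NeZero d] := MvPolynomial (Fin d) (ZMod 2) ⧸ rgRel d

/-- The images `t = gen d 0`, `α_i = gen d i` of the variables in `H`. -/
noncomputable def gen (d : ℕ) [NeZero d] (i : Fin d) : RGH d :=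
  Ideal.Quotient.mk (rgRel d) (X i)

/-- The augmentation ideal `H_+` of `H` (the ideal of elements with zero constant term,
which is generated by the images of the variables since `H` is generated in degree 1). -/
noncomputable def Hplus (d : ℕ) [NeZero d] : Ideal (RGH d) :=
  Ideal.span (Set.range (gen d))

/-- An element of `H` is homogeneous (of some degree `n`) if it is the image of a
homogeneous polynomial of degree `n`; since the relation ideal is homogeneous this
agrees with the quotient grading. -/
def IsHomogElem (d : ℕ) [NeZero d] (h : RGH d) : Prop :=
  ∃ n : ℕ, ∃ p : MvPolynomial (Fin d) (ZMod 2),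
    p.IsHomogeneous n ∧ Ideal.Quotient.mk (rgRel d) p = h

noncomputable def liftH {d : ℕ} [NeZero d] {A : Type*} [CommRing A] [Algebra (ZMod 2) A]
    (f : Fin d → A) (h0 : f 0 ^ 2 = 0) (hi : ∀ i, i ≠ 0 → f i ^ 2 = f 0 * f i) :
    RGH d →ₐ[ZMod 2] A :=
  Ideal.Quotient.liftₐ (rgRel d) (MvPolynomial.aeval f) (by
    intro a ha
    have : rgRel d ≤ RingHom.ker (MvPolynomial.aeval f : MvPolynomial (Fin d) (ZMod 2) →ₐ[ZMod 2] A) := by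
      unfold rgRel
      rw [Ideal.span_le]
      rintro p (rfl | ⟨i, hi0, rfl⟩)
      · simp [RingHom.mem_ker, h0]
      · simp [RingHom.mem_ker, hi i hi0]
    exact this ha)

theorem liftH_mk {d : ℕ} [NeZero d] {A : Type*} [CommRing A] [Algebra (ZMod 2) A]
    (f : Fin d → A) (h0 hi) (p : MvPolynomial (Fin d) (ZMod 2)) :
    liftH f h0 hi (Ideal.Quotient.mk (rgRel d) p) = MvPolynomial.aeval f p := rfl

theorem liftH_gen {d : ℕ} [NeZero d] {A : Type*} [CommRing A] [Algebra (ZMod 2) A]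
    (f : Fin d → A) (h0 hi) (i : Fin d) : liftH f h0 hi (gen d i) = f i := by
  simp [gen, liftH_mk]

/-- linear form with coefficient vector `u` -/
noncomputable def lin {d : ℕ} [NeZero d] (u : Fin d → ZMod 2) : RGH d := ∑ i, u i • gen d i

/-- truncation to degree at most one -/
noncomputable def phi (d : ℕ) [NeZero d] :
    RGH d →ₐ[ZMod 2] TrivSqZeroExt (ZMod 2) (Fin d → ZMod 2) :=
  liftH (fun i => TrivSqZeroExt.inr (Pi.single i 1)) (by simp [pow_two]) (by simp [pow_two])

theorem phi_gen (d : ℕ) [NeZero d] (i : Fin d) :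
    phi d (gen d i) = TrivSqZeroExt.inr (Pi.single i 1) := liftH_gen _ _ _ _

theorem phi_mk_fst (d : ℕ) [NeZero d] (p : MvPolynomial (Fin d) (ZMod 2)) :
    (phi d (Ideal.Quotient.mk _ p)).fst = MvPolynomial.coeff 0 p := by
  induction p using MvPolynomial.induction_on with
  | C a =>
    rw [phi, liftH_mk, MvPolynomial.aeval_C]; simp [TrivSqZeroExt.algebraMap_eq_inl]
  | add p q hp hq => simp [hp, hq]
  | mul_X p j hp =>
    have := phi_gen d j
    rw [gen] at this
    rw [map_mul, map_mul, this]
    simp [MvPolynomial.coeff_mul_X']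

theorem phi_mk_snd (d : ℕ) [NeZero d] (p : MvPolynomial (Fin d) (ZMod 2)) (i : Fin d) :
    (phi d (Ideal.Quotient.mk _ p)).snd i = MvPolynomial.coeff (Finsupp.single i 1) p := by
  induction p using MvPolynomial.induction_on with
  | C a =>
    rw [phi, liftH_mk, MvPolynomial.aeval_C]
    have h0 : (0 : Fin d →₀ ℕ) ≠ Finsupp.single i 1 := fun h => by
      simpa using congrArg (fun m : Fin d →₀ ℕ => m i) h
    simp [TrivSqZeroExt.algebraMap_eq_inl, MvPolynomial.coeff_C, h0]
  | add p q hp hq => simp [hp, hq]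
  | mul_X p j hp =>
    have := phi_gen d j
    rw [gen] at this
    rw [map_mul, map_mul, this]
    by_cases h : i = j
    · subst h
      simp [MvPolynomial.coeff_mul_X', phi_mk_fst]
    · simp [MvPolynomial.coeff_mul_X', phi_mk_fst, h, Ne.symm h]

theorem homog_eq_lin (d : ℕ) [NeZero d] (z : RGH d) (hz : IsHomogElem d z)
    (hL : (phi d z).snd ≠ 0) : z = lin (phi d z).snd := by
  obtain ⟨n, p, hp, rfl⟩ := hz
  obtain ⟨i, hi⟩ := Function.ne_iff.mp hL
  rw [phi_mk_snd] at hi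
  have hn := hp hi
  have hn : n = 1 := by
    rw [← hn]; simp [Finsupp.weight_single]
  subst hn
  have hpe : p = ∑ i, MvPolynomial.C (MvPolynomial.coeff (Finsupp.single i 1) p) * X i := by
    ext m
    rw [MvPolynomial.coeff_sum]
    simp only [MvPolynomial.coeff_C_mul, MvPolynomial.coeff_X]
    by_cases hm : m.degree = 1
    · have hj : ∃ j, m = Finsupp.single j 1 := by
        have hm0 : m ≠ 0 := by rintro rfl; simp at hm
        obtain ⟨j, hj⟩ := Finsupp.ne_iff.mp hm0
        have hj : m j ≠ 0 := by simpa using hj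
        refine ⟨j, ?_⟩
        have hle : Finsupp.single j 1 ≤ m := by
          rw [Finsupp.single_le_iff]; omega
        have hadd := add_tsub_cancel_of_le hle
        have hdeg := congrArg Finsupp.degree hadd
        rw [map_add, Finsupp.degree_single, hm] at hdeg
        have hz : (m - Finsupp.single j 1).degree = 0 := by omega
        rw [Finsupp.degree_eq_zero_iff] at hz
        rw [← hadd, hz, add_zero]
      obtain ⟨j, rfl⟩ := hj
      simp [Finsupp.single_left_inj]
    · rw [hp.coeff_eq_zero hm]
      symm
      apply Finset.sum_eq_zero
      intro j _
      rw [if_neg, mul_zero]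
      rintro rfl
      simp at hm
  have : ∀ i, (phi d (Ideal.Quotient.mk _ p)).snd i = MvPolynomial.coeff (Finsupp.single i 1) p :=
    phi_mk_snd d p
  simp only [lin, this, gen]
  conv_lhs => rw [hpe]
  rw [map_sum]
  refine Finset.sum_congr rfl fun j _ => ?_
  rw [← MvPolynomial.smul_eq_C_mul]
  rfl

theorem lin_sq (d : ℕ) [NeZero d] (u : Fin d → ZMod 2) : lin u * (lin u + gen d 0) = 0 := by
  have h2 : (2 : RGH d) = 0 := by
    have h : ((2 : ZMod 2)) = 0 := rfl
    have := congrArg (algebraMap (ZMod 2) (RGH d)) h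
    rw [map_zero] at this
    rw [← this]
    exact (map_ofNat (algebraMap (ZMod 2) (RGH d)) 2).symm
  have hg : ∀ i, gen d i * gen d i = gen d 0 * gen d i ∨ i = 0 ∧ gen d 0 * gen d 0 = 0 := by
    intro i
    by_cases hi : i = 0
    · right
      refine ⟨hi, ?_⟩
      rw [gen, ← map_mul, Ideal.Quotient.eq_zero_iff_mem]
      exact Ideal.subset_span (Or.inl (by ring))
    · left
      rw [gen, gen, ← map_mul, ← map_mul, Ideal.Quotient.eq]
      exact Ideal.subset_span (Or.inr ⟨i, hi, by ring⟩)
  have key : lin u * lin u = gen d 0 * lin u := by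
    unfold lin
    apply Finset.sum_induction (fun i => u i • gen d i) (fun x => x * x = gen d 0 * x)
    · intro a b ha hb
      linear_combination ha + hb + a * b * h2
    · simp
    · intro i _
      have hu : ∀ c : ZMod 2, c * c = c := by decide
      rw [smul_mul_smul_comm, hu, mul_smul_comm]
      rcases hg i with h | ⟨rfl, h⟩ <;> rw [h]
  linear_combination key + gen d 0 * lin u * h2

theorem phi_lin (d : ℕ) [NeZero d] (u : Fin d → ZMod 2) : (phi d (lin u)).snd = u := by
  simp only [lin, map_sum, map_smul, phi_gen]
  ext j
  rw [TrivSqZeroExt.snd_sum]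
  simp [Pi.single_apply]

theorem span_phi (d : ℕ) [NeZero d] (Z : Set (RGH d)) (S : Submodule (ZMod 2) (Fin d → ZMod 2))
    (h0 : ∀ z ∈ Z, (phi d z).fst = 0) (hS : ∀ z ∈ Z, (phi d z).snd ∈ S)
    (y : RGH d) (hy : y ∈ Ideal.span Z) : (phi d y).fst = 0 ∧ (phi d y).snd ∈ S := by
  induction hy using Submodule.span_induction with
  | mem x hx => exact ⟨h0 x hx, hS x hx⟩
  | zero => simp
  | add x y _ _ hx hy => simpa [hx.1, hy.1] using S.add_mem hx.2 hy.2
  | smul a x _ hx => simpa [hx.1] using S.smul_mem _ hx.2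

/-- test algebra, with basis `1, ε, ω, εω` and relations `ε² = 0`, `ω² = c ω` -/
abbrev QA (c : DualNumber (ZMod 2)) := QuadraticAlgebra (DualNumber (ZMod 2)) 0 c

/-- the element `ε` -/
def qe (c : DualNumber (ZMod 2)) : QA c := ⟨DualNumber.eps, 0⟩

/-- the element `ω` -/
def qw (c : DualNumber (ZMod 2)) : QA c := ⟨0, 1⟩

theorem qe_sq (c : DualNumber (ZMod 2)) : qe c ^ 2 = 0 := by
  rw [pow_two]
  apply QuadraticAlgebra.ext <;> simp [qe]

theorem qw_sq : qw DualNumber.eps ^ 2 = qe DualNumber.eps * qw DualNumber.eps := by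
  rw [pow_two]
  apply QuadraticAlgebra.ext <;> simp [qe, qw]

theorem qw_sq_zero : qw 0 ^ 2 = 0 := by
  rw [pow_two]
  apply QuadraticAlgebra.ext <;> simp [qw]

theorem q_mul (c : DualNumber (ZMod 2)) (a b a₂ b₂ : ZMod 2) :
    ((a • qe c + b • qw c) * (a₂ • qe c + b₂ • qw c)).im.snd =
      a * b₂ + b * a₂ + b * b₂ * c.snd := by
  simp [qe, qw]
  ring

theorem ann_lin (d : ℕ) [NeZero d] (u v : Fin d → ZMod 2) (hu : ∃ i, i ≠ 0 ∧ u i ≠ 0)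
    (hv : v ≠ 0) (h : lin v * lin u = 0) : v = u + Pi.single 0 1 := by
  obtain ⟨i, hi0, hi⟩ := hu
  have z2 : ∀ c : ZMod 2, c ≠ 0 → c = 1 := by decide
  have hi := z2 _ hi
  have h1 : ∀ i, i ≠ 0 → v 0 * u i + v i * u 0 + v i * u i = 0 := by
    intro i hi0
    let f : Fin d → QA DualNumber.eps := fun k => (if k = 0 then qe _ else 0) +
      (if k = i then qw _ else 0)
    have hA : f 0 ^ 2 = 0 := by
        simp [f, hi0.symm, qe_sq]
    have hB : ∀ k, k ≠ 0 → f k ^ 2 = f 0 * f k := by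
        intro k hk
        by_cases hki : k = i
        · subst hki; simp [f, hi0, hi0.symm, qw_sq]
        · simp [f, hk, hki]
    have hf : ∀ w, liftH f hA hB (lin w) = w 0 • qe DualNumber.eps + w i • qw DualNumber.eps := by
      intro w
      simp only [lin, map_sum, map_smul, liftH_gen, f, smul_add, smul_ite, smul_zero, Finset.sum_add_distrib, Finset.sum_ite_eq', Finset.mem_univ, if_true]
    have := congrArg (liftH f hA hB) h
    rw [map_mul, hf, hf, map_zero] at this
    have := congrArg (fun a : QA DualNumber.eps => a.im.snd) this
    rw [q_mul] at this
    simpa using this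
  have h2 : ∀ i j, i ≠ 0 → j ≠ 0 → i ≠ j → v i * u j + v j * u i = 0 := by
    intro i j hi0 hj0 hij
    let f : Fin d → QA 0 := fun k => (if k = j then qe _ else 0) +
      (if k = i then qw _ else 0)
    have hA : f 0 ^ 2 = 0 := by
        simp [f, hi0.symm, hj0.symm]
    have hB : ∀ k, k ≠ 0 → f k ^ 2 = f 0 * f k := by
        intro k hk
        by_cases hki : k = i
        · subst hki; simp [f, hi0.symm, hj0.symm, qw_sq_zero, hij]
        · by_cases hkj : k = j
          · subst hkj; simp [f, hi0.symm, hj0.symm, qe_sq, hki]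
          · simp [f, hkj, hki]
    have hf : ∀ w, liftH f hA hB (lin w) = w j • qe 0 + w i • qw 0 := by
      intro w
      simp only [lin, map_sum, map_smul, liftH_gen, f, smul_add, smul_ite, smul_zero, Finset.sum_add_distrib, Finset.sum_ite_eq', Finset.mem_univ, if_true]
    have := congrArg (liftH f hA hB) h
    rw [map_mul, hf, hf, map_zero] at this
    have := congrArg (fun a : QA 0 => a.im.snd) this
    rw [q_mul] at this
    simpa [add_comm] using this
  have hvi : v i = 1 := by
    apply z2
    intro hvi
    apply hv
    ext j
    by_cases hj0 : j = 0
    · subst hj0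
      simpa [hi, hvi] using h1 i hi0
    by_cases hij : i = j
    · subst hij; simpa using hvi
    simpa [hi, hvi] using h2 i j hi0 hj0 hij
  have z3 : ∀ a b : ZMod 2, a + b = 0 → b = a := by decide
  have z4 : ∀ a b : ZMod 2, a + b + 1 = 0 → a = b + 1 := by decide
  ext j
  by_cases hj0 : j = 0
  · subst hj0
    simpa using z4 _ _ (by simpa [hi, hvi] using h1 i hi0)
  by_cases hij : i = j
  · subst hij; simp [hi, hvi, hi0]
  simpa [hj0] using z3 _ _ (by simpa [hi, hvi] using h2 i j hi0 hj0 hij)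

theorem exists_not_mem (d : ℕ) [NeZero d] (hd : 3 ≤ d) (X : Set (RGH d))
    (hX : Ideal.span X = Hplus d) (a b : Fin d → ZMod 2) :
    ∃ x ∈ X, (phi d x).snd ∉ Submodule.span (ZMod 2) {a, b} := by
  by_contra! hcon
  have hfst : ∀ z ∈ X, (phi d z).fst = 0 := by
    intro z hz
    have hz : z ∈ Hplus d := hX ▸ Ideal.subset_span hz
    refine (span_phi d (Set.range (gen d)) ⊤ ?_ (by simp) z hz).1
    rintro _ ⟨i, rfl⟩
    simp [phi_gen]
  have htop : Submodule.span (ZMod 2) {a, b} = ⊤ := by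
    rw [eq_top_iff]
    intro v _
    have hv : lin v ∈ Ideal.span X := by
      rw [hX]
      refine Submodule.sum_mem _ fun i _ => ?_
      exact Submodule.smul_of_tower_mem _ _ (Ideal.subset_span ⟨i, rfl⟩)
    have := (span_phi d X _ hfst hcon _ hv).2
    rwa [phi_lin] at this
  have h1 := finrank_span_le_card (R := ZMod 2) ({a, b} : Set (Fin d → ZMod 2))
  rw [htop, finrank_top, Module.finrank_fin_fun] at h1
  have h3 : ({a, b} : Set (Fin d → ZMod 2)).toFinset.card ≤ 2 := by
    rw [← Set.ncard_eq_toFinset_card']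
    exact (Set.ncard_insert_le _ _).trans (by simp)
  omega

theorem partner (d : ℕ) [NeZero d] (hd : 3 ≤ d) (X : Set (RGH d))
    (hhom : ∀ z ∈ X, IsHomogElem d z) (hX : Ideal.span X = Hplus d)
    (hcol : ∀ Y ⊂ X, ∀ z ∈ X \ Y, ∃ Z ⊆ X, colonIdeal (Ideal.span Y) z = Ideal.span Z)
    (w : RGH d) (hw : w ∈ X) (hwL : (phi d w).snd ∉ Submodule.span (ZMod 2) {Pi.single 0 1}) :
    w + gen d 0 ∈ X := by
  have hfst : ∀ z ∈ X, (phi d z).fst = 0 := by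
    intro z hz
    have hz : z ∈ Hplus d := hX ▸ Ideal.subset_span hz
    refine (span_phi d (Set.range (gen d)) ⊤ ?_ (by simp) z hz).1
    rintro _ ⟨i, rfl⟩
    simp [phi_gen]
  have hw0 : (phi d w).snd ≠ 0 := fun h => hwL (h ▸ Submodule.zero_mem _)
  have hwl := homog_eq_lin d w (hhom w hw) hw0
  obtain ⟨Z, hZX, hZ⟩ := hcol ∅ ((Set.empty_ssubset).mpr ⟨w, hw⟩) w ⟨hw, by simp⟩
  have hmem : ∀ a, a ∈ Ideal.span Z ↔ a * w = 0 := by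
    intro a
    rw [← hZ]
    simp [colonIdeal]
  have h1 : w + gen d 0 ∈ Ideal.span Z := by
    rw [hmem, mul_comm, hwl]
    exact lin_sq d _
  have hne : ∃ m ∈ Z, (phi d m).snd ≠ 0 := by
    by_contra! hcon
    have := (span_phi d Z ⊥ (fun z hz => hfst z (hZX hz)) (by simpa using hcon) _ h1).2
    rw [map_add, phi_gen] at this
    apply hwL
    rw [Submodule.mem_span_singleton]
    refine ⟨-1, ?_⟩
    rw [neg_smul, one_smul]
    have h : (phi d w).snd + Pi.single 0 1 = 0 := by simpa using this
    rw [eq_neg_of_add_eq_zero_left h]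
  obtain ⟨m, hmZ, hm⟩ := hne
  have hml := homog_eq_lin d m (hhom m (hZX hmZ)) hm
  have h0 := (hmem m).mp (Ideal.subset_span hmZ)
  have hu : ∃ i, i ≠ 0 ∧ (phi d w).snd i ≠ 0 := by
    by_contra! hcon
    apply hwL
    rw [Submodule.mem_span_singleton]
    refine ⟨(phi d w).snd 0, ?_⟩
    ext j
    by_cases hj : j = 0
    · subst hj; simp
    · simp [hj, hcon j hj]
  rw [hml, hwl] at h0
  have := ann_lin d (phi d w).snd (phi d m).snd hu hm h0
  have hmw : m = w + gen d 0 := by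
    rw [hml, this]
    conv_rhs => rw [hwl]
    simp [lin, add_smul, Finset.sum_add_distrib, Pi.single_apply]
  exact hmw ▸ hZX hmZ

theorem stmt14 (d : ℕ) [NeZero d] (hd : 3 ≤ d) :
    ¬ ∃ X : Set (RGH d),
        (∀ z ∈ X, IsHomogElem d z) ∧
        Ideal.span X = Hplus d ∧
        (∀ Y ⊂ X, Ideal.span Y ≠ Hplus d) ∧
        (∀ Y ⊂ X, ∀ z ∈ X \ Y,
          ∃ Z ⊆ X, colonIdeal (Ideal.span Y) z = Ideal.span Z) := by
  rintro ⟨X, hhom, hX, hmin, hcol⟩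
  obtain ⟨w, hw, hwL⟩ := exists_not_mem d hd X hX (Pi.single 0 1) (Pi.single 0 1)
  rw [Set.pair_eq_singleton] at hwL
  obtain ⟨m, hm, hmL⟩ := exists_not_mem d hd X hX (Pi.single 0 1) (phi d w).snd
  have hww2 := partner d hd X hhom hX hcol w hw hwL
  have hmm2 := partner d hd X hhom hX hcol m hm
    (fun h => hmL (Submodule.span_mono (by simp) h))
  have hsnd : ∀ a, (phi d (a + gen d 0)).snd = (phi d a).snd + Pi.single 0 1 := by
    intro a; simp [phi_gen]
  have he : (Pi.single 0 1 : Fin d → ZMod 2) ∈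
      Submodule.span (ZMod 2) {Pi.single 0 1, (phi d w).snd} := Submodule.subset_span (by simp)
  have hww : (phi d w).snd ∈
      Submodule.span (ZMod 2) {Pi.single 0 1, (phi d w).snd} := Submodule.subset_span (by simp)
  have n1 : m ≠ w := by rintro rfl; exact hmL hww
  have n2 : m ≠ w + gen d 0 := by
    intro h
    apply hmL
    rw [h, hsnd]
    exact Submodule.add_mem _ hww he
  have n3 : m ≠ m + gen d 0 := by
    intro h
    have := congrArg (fun a => (phi d a).snd 0) h
    simp [phi_gen] at this
  have h2 : (2 : RGH d) = 0 := by
    have h : ((2 : ZMod 2)) = 0 := rfl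
    have := congrArg (algebraMap (ZMod 2) (RGH d)) h
    rw [map_zero] at this
    rw [← this]
    exact (map_ofNat (algebraMap (ZMod 2) (RGH d)) 2).symm
  have hsub : X \ {m} ⊂ X := Set.sdiff_singleton_ssubset.mpr hm
  refine hmin _ hsub ?_
  rw [← hX]
  refine le_antisymm (Ideal.span_mono hsub.subset) (Ideal.span_le.mpr ?_)
  intro x hx
  by_cases hxm : x = m
  · have e : x = w + (w + gen d 0) + (m + gen d 0) := by
      rw [hxm]; linear_combination (-w - gen d 0) * h2
    rw [e]
    refine Ideal.add_mem _ (Ideal.add_mem _ ?_ ?_) ?_ <;> apply Ideal.subset_span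
    · exact ⟨hw, fun h => n1 h.symm⟩
    · exact ⟨hww2, fun h => n2 h.symm⟩
    · exact ⟨hmm2, fun h => n3 h.symm⟩
  · exact Ideal.subset_span ⟨hx, hxm⟩
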